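/- Consider the individual storage profit-maximization problem over the feasible set S with price vector π ∈ ℝ^T, and let (g^D, g^C, E) ∈ S be a dispatch such that at some interval t: 0 < g^D_t < ḡ^D; the discharge ramp constraints between intervals t−1 and t and between t and t+1 are strictly nonbinding at (g^D, g^C, E); and E̲ < E_{t'} < Ē for all t' ≥ t. If π_t ≠ (f^D_t)'(g^D_t), then there exists (p^D, p^C, e) ∈ S with profit(π; p^D, p^C) > profit(π; g^D, g^C); consequently LOC(π) = Q(π) − profit(π; g^D, g^C) > 0. The analogous conclusion holds in the charging case: if 0 < g^C_t < ḡ^C with strictly nonbinding charging ramp constraints around t, strictly interior SOC from t on, and π_t ≠ (f^C_t)'(g^C_t), then LOC(π) > 0. -/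

import Mathlib

/-- Parameters of a (generalized) energy storage resource (ESR):
discharge/charge efficiencies, initial SOC and initial charge/discharge
levels, ramp limits, SOC limits and capacity limits. -/
structure ESRParams where
  xiD : ℝ
  xiC : ℝ
  hxiD : xiD ∈ Set.Ioc (0 : ℝ) 1
  hxiC : xiC ∈ Set.Ioc (0 : ℝ) 1
  E0 : ℝ
  pD0 : ℝ
  pC0 : ℝ
  rDup : ℝ
  rDdn : ℝ
  rCup : ℝ
  rCdn : ℝ
  hrDup : 0 ≤ rDup
  hrDdn : 0 ≤ rDdn
  hrCup : 0 ≤ rCup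
  hrCdn : 0 ≤ rCdn
  Elo : ℝ
  Ehi : ℝ
  hElim : Elo ≤ Ehi
  gDmax : ℝ
  gCmax : ℝ
  hgD : 0 < gDmax
  hgC : 0 < gCmax

/-- The individual feasible set `S` of the ESR over horizon `T`
(intervals `t = 1, …, T`; index `0` carries the initial conditions):
SOC transition, ramp constraints, SOC limits and capacity limits. -/
def Feasible (T : ℕ) (P : ESRParams) (pD pC e : ℕ → ℝ) : Prop :=
  pD 0 = P.pD0 ∧ pC 0 = P.pC0 ∧ e 0 = P.E0 ∧
  ∀ t ∈ Finset.Icc 1 T,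
    e t - e (t - 1) = P.xiC * pC t - pD t / P.xiD ∧
    -P.rDdn ≤ pD t - pD (t - 1) ∧ pD t - pD (t - 1) ≤ P.rDup ∧
    -P.rCdn ≤ pC t - pC (t - 1) ∧ pC t - pC (t - 1) ≤ P.rCup ∧
    P.Elo ≤ e t ∧ e t ≤ P.Ehi ∧
    0 ≤ pD t ∧ pD t ≤ P.gDmax ∧
    0 ≤ pC t ∧ pC t ≤ P.gCmax

/-- Profit of the ESR under (possibly distinct) discharge/charge price
sequences `piD, piC`, with bid curves `fD` (discharge cost) and `fC`
(charging benefit).  For a uniform price `π`, take `piD = piC = π`. -/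
def profit (T : ℕ) (piD piC : ℕ → ℝ) (fD fC : ℕ → ℝ → ℝ)
    (pD pC : ℕ → ℝ) : ℝ :=
  ∑ t ∈ Finset.Icc 1 T,
    (piD t * pD t - piC t * pC t - fD t (pD t) + fC t (pC t))

/-- The ESR is "marginal" in discharging at interval `t`: discharge strictly
within capacity, discharge ramp constraints strictly nonbinding between
`t-1` and `t` and between `t` and `t+1` (the latter only required when
`t < T`), and SOC strictly interior from `t` to the end of the horizon. -/
def MarginalD (T : ℕ) (P : ESRParams) (gD e : ℕ → ℝ) (t : ℕ) : Prop :=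
  0 < gD t ∧ gD t < P.gDmax ∧
  (-P.rDdn < gD t - gD (t - 1) ∧ gD t - gD (t - 1) < P.rDup) ∧
  (t < T → -P.rDdn < gD (t + 1) - gD t ∧ gD (t + 1) - gD t < P.rDup) ∧
  (∀ t', t ≤ t' → t' ≤ T → P.Elo < e t' ∧ e t' < P.Ehi)

/-- The ESR is "marginal" in charging at interval `t`. -/
def MarginalC (T : ℕ) (P : ESRParams) (gC e : ℕ → ℝ) (t : ℕ) : Prop :=
  0 < gC t ∧ gC t < P.gCmax ∧
  (-P.rCdn < gC t - gC (t - 1) ∧ gC t - gC (t - 1) < P.rCup) ∧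
  (t < T → -P.rCdn < gC (t + 1) - gC t ∧ gC (t + 1) - gC t < P.rCup) ∧
  (∀ t', t ≤ t' → t' ≤ T → P.Elo < e t' ∧ e t' < P.Ehi)

/-- The set of profits attainable over the feasible set `S`. -/
def profitSet (T : ℕ) (P : ESRParams) (piD piC : ℕ → ℝ)
    (fD fC : ℕ → ℝ → ℝ) : Set ℝ :=
  {x | ∃ pD pC e, Feasible T P pD pC e ∧ x = profit T piD piC fD fC pD pC}

/-- `Q(π) = sup` of the profit over the feasible set `S`. -/
noncomputable def Qmax (T : ℕ) (P : ESRParams) (piD piC : ℕ → ℝ)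
    (fD fC : ℕ → ℝ → ℝ) : ℝ :=
  sSup (profitSet T P piD piC fD fC)

/-- Lost opportunity cost of a dispatch: `LOC(π) = Q(π) − profit(π; ·)`. -/
noncomputable def LOC (T : ℕ) (P : ESRParams) (piD piC : ℕ → ℝ)
    (fD fC : ℕ → ℝ → ℝ) (pD pC : ℕ → ℝ) : ℝ :=
  Qmax T P piD piC fD fC - profit T piD piC fD fC pD pC

theorem aux_exists (h : ℝ → ℝ) (x h' : ℝ) (hd : HasDerivAt h h' x) (hne : h' ≠ 0)
    (p : ℝ → Prop) (hp : ∀ᶠ y in nhds x, p y) : ∃ y, p y ∧ h x < h y := by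
  by_contra! hc
  have : IsLocalMax h x := hp.mono hc
  exact hne (this.hasDerivAt_eq_zero hd)

theorem aux_bdd (T : ℕ) (P : ESRParams) (π : ℕ → ℝ) (fD fC : ℕ → ℝ → ℝ)
    (hfDdiff : ∀ t, Differentiable ℝ (fD t)) (hfCdiff : ∀ t, Differentiable ℝ (fC t)) :
    BddAbove (profitSet T P π π fD fC) := by
  have hb : ∀ t, ∃ M, ∀ x ∈ Set.Icc 0 P.gDmax, ∀ z ∈ Set.Icc 0 P.gCmax,
      π t * x - π t * z - fD t x + fC t z ≤ M := by
    intro t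
    have c1 := (hfDdiff t).continuous
    have c2 := (hfCdiff t).continuous
    have hk : IsCompact (Set.Icc 0 P.gDmax ×ˢ Set.Icc 0 P.gCmax) :=
      isCompact_Icc.prod isCompact_Icc
    have hc : Continuous (fun q : ℝ × ℝ => π t * q.1 - π t * q.2 - fD t q.1 + fC t q.2) := by
      fun_prop
    obtain ⟨M, hM⟩ := hk.bddAbove_image hc.continuousOn
    exact ⟨M, fun x hx z hz => hM ⟨(x, z), ⟨hx, hz⟩, rfl⟩⟩
  choose M hM using hb
  refine ⟨∑ t ∈ Finset.Icc 1 T, M t, ?_⟩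
  rintro _ ⟨pD, pC, e, hf, rfl⟩
  refine Finset.sum_le_sum fun s hs => ?_
  obtain ⟨q1, q2, q3, q4, q5, q6, q7, q8, q9, q10, q11⟩ := hf.2.2.2 s hs
  exact hM s _ ⟨q8, q9⟩ _ ⟨q10, q11⟩

theorem aux_feasD (T : ℕ) (P : ESRParams) (gD gC E : ℕ → ℝ)
    (hfeas : Feasible T P gD gC E) (t : ℕ) (ht1 : 1 ≤ t)
    (hm : MarginalD T P gD E t) :
    ∀ᶠ y in nhds (gD t), Feasible T P (Function.update gD t y) (gC)
      (fun s => if t ≤ s then E s - (y - gD t) / P.xiD else E s) := by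
  obtain ⟨h0, h1, ⟨h2, h3⟩, h4, h5⟩ := hm
  have k0 : ∀ᶠ y in nhds (gD t), 0 < y := lt_mem_nhds h0
  have k1 : ∀ᶠ y in nhds (gD t), y < P.gDmax := gt_mem_nhds h1
  have k2 : ∀ᶠ y in nhds (gD t), -P.rDdn < y - gD (t - 1) :=
    (continuousAt_const.eventually_lt (by fun_prop) h2)
  have k3 : ∀ᶠ y in nhds (gD t), y - gD (t - 1) < P.rDup :=
    (ContinuousAt.eventually_lt (by fun_prop) continuousAt_const h3)
  have k4 : ∀ᶠ y in nhds (gD t), t < T → -P.rDdn < gD (t + 1) - y ∧ gD (t + 1) - y < P.rDup := by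
    by_cases h : t < T
    · have a : ∀ᶠ y in nhds (gD t), -P.rDdn < gD (t + 1) - y :=
        (continuousAt_const.eventually_lt (by fun_prop) (h4 h).1)
      have b : ∀ᶠ y in nhds (gD t), gD (t + 1) - y < P.rDup :=
        (ContinuousAt.eventually_lt (by fun_prop) continuousAt_const (h4 h).2)
      filter_upwards [a, b] with y ha hb _ using ⟨ha, hb⟩
    · exact Filter.Eventually.of_forall fun y hy => absurd hy h
  have k5 : ∀ᶠ y in nhds (gD t), ∀ s ∈ Finset.Icc t T,
      P.Elo < E s - (y - gD t) / P.xiD ∧ E s - (y - gD t) / P.xiD < P.Ehi := by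
    rw [Filter.eventually_all_finset]
    intro s hs
    rw [Finset.mem_Icc] at hs
    have h := h5 s hs.1 hs.2
    have a : ∀ᶠ y in nhds (gD t), P.Elo < E s - (y - gD t) / P.xiD :=
      (continuousAt_const.eventually_lt (by fun_prop) (by simpa using h.1))
    have b : ∀ᶠ y in nhds (gD t), E s - (y - gD t) / P.xiD < P.Ehi :=
      (ContinuousAt.eventually_lt (by fun_prop) continuousAt_const (by simpa using h.2))
    exact a.and b
  filter_upwards [k0, k1, k2, k3, k4, k5] with y j0 j1 k2 k3 k4 k5
  obtain ⟨f0, f1, f2, f3⟩ := hfeas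
  have t0 : (0 : ℕ) ≠ t := by omega
  refine ⟨by simpa [t0] using f0, by simpa [t0] using f1, ?_, ?_⟩
  · have : ¬ t ≤ 0 := by omega
    simpa [t0, this] using f2
  intro s hs
  obtain ⟨q1, q2, q3, q4, q5, q6, q7, q8, q9, q10, q11⟩ := f3 s hs
  have hs' := Finset.mem_Icc.1 hs
  rcases lt_trichotomy s t with hst | hst | hst
  · have a1 : s ≠ t := by omega
    have a2 : s - 1 ≠ t := by omega
    have a3 : ¬ t ≤ s := by omega
    have a4 : ¬ t ≤ s - 1 := by omega
    simp only [Function.update_of_ne a1, Function.update_of_ne a2, if_neg a3, if_neg a4]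
    exact ⟨q1, q2, q3, q4, q5, q6, q7, q8, q9, q10, q11⟩
  · subst hst
    have a2 : s - 1 ≠ s := by omega
    have a4 : ¬ s ≤ s - 1 := by omega
    have k := k5 s (Finset.mem_Icc.2 ⟨le_rfl, hs'.2⟩)
    simp only [Function.update_self, Function.update_of_ne a2, if_neg a4, le_refl, if_true]
    have e1 : E s - (y - gD s) / P.xiD - E (s - 1) = P.xiC * gC s - y / P.xiD := by
      linear_combination q1
    exact ⟨e1, k2.le, k3.le, q4, q5, k.1.le, k.2.le, j0.le, j1.le, q10, q11⟩
  · have a1 : s ≠ t := by omega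
    have a3 : t ≤ s := by omega
    have a4 : t ≤ s - 1 := by omega
    have k := k5 s (Finset.mem_Icc.2 ⟨a3, hs'.2⟩)
    simp only [Function.update_of_ne a1, if_pos a3, if_pos a4]
    refine ⟨by linear_combination q1, ?_, ?_, q4, q5, k.1.le, k.2.le, q8, q9, q10, q11⟩
    all_goals
      by_cases c : s - 1 = t
      · have c' : s = t + 1 := by omega
        subst c'
        have := k4 (by omega)
        rw [c, Function.update_self]
        linarith [this.1, this.2]
      · rw [Function.update_of_ne c]
        assumption

theorem aux_feasC (T : ℕ) (P : ESRParams) (gD gC E : ℕ → ℝ)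
    (hfeas : Feasible T P gD gC E) (t : ℕ) (ht1 : 1 ≤ t)
    (hm : MarginalC T P gC E t) :
    ∀ᶠ y in nhds (gC t), Feasible T P (gD) (Function.update gC t y)
      (fun s => if t ≤ s then E s + P.xiC * (y - gC t) else E s) := by
  obtain ⟨h0, h1, ⟨h2, h3⟩, h4, h5⟩ := hm
  have k0 : ∀ᶠ y in nhds (gC t), 0 < y := lt_mem_nhds h0
  have k1 : ∀ᶠ y in nhds (gC t), y < P.gCmax := gt_mem_nhds h1
  have k2 : ∀ᶠ y in nhds (gC t), -P.rCdn < y - gC (t - 1) :=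
    (continuousAt_const.eventually_lt (by fun_prop) h2)
  have k3 : ∀ᶠ y in nhds (gC t), y - gC (t - 1) < P.rCup :=
    (ContinuousAt.eventually_lt (by fun_prop) continuousAt_const h3)
  have k4 : ∀ᶠ y in nhds (gC t), t < T → -P.rCdn < gC (t + 1) - y ∧ gC (t + 1) - y < P.rCup := by
    by_cases h : t < T
    · have a : ∀ᶠ y in nhds (gC t), -P.rCdn < gC (t + 1) - y :=
        (continuousAt_const.eventually_lt (by fun_prop) (h4 h).1)
      have b : ∀ᶠ y in nhds (gC t), gC (t + 1) - y < P.rCup :=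
        (ContinuousAt.eventually_lt (by fun_prop) continuousAt_const (h4 h).2)
      filter_upwards [a, b] with y ha hb _ using ⟨ha, hb⟩
    · exact Filter.Eventually.of_forall fun y hy => absurd hy h
  have k5 : ∀ᶠ y in nhds (gC t), ∀ s ∈ Finset.Icc t T,
      P.Elo < E s + P.xiC * (y - gC t) ∧ E s + P.xiC * (y - gC t) < P.Ehi := by
    rw [Filter.eventually_all_finset]
    intro s hs
    rw [Finset.mem_Icc] at hs
    have h := h5 s hs.1 hs.2
    have a : ∀ᶠ y in nhds (gC t), P.Elo < E s + P.xiC * (y - gC t) :=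
      (continuousAt_const.eventually_lt (by fun_prop) (by simpa using h.1))
    have b : ∀ᶠ y in nhds (gC t), E s + P.xiC * (y - gC t) < P.Ehi :=
      (ContinuousAt.eventually_lt (by fun_prop) continuousAt_const (by simpa using h.2))
    exact a.and b
  filter_upwards [k0, k1, k2, k3, k4, k5] with y j0 j1 k2 k3 k4 k5
  obtain ⟨f0, f1, f2, f3⟩ := hfeas
  have t0 : (0 : ℕ) ≠ t := by omega
  refine ⟨by simpa [t0] using f0, by simpa [t0] using f1, ?_, ?_⟩
  · have : ¬ t ≤ 0 := by omega
    simpa [t0, this] using f2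
  intro s hs
  obtain ⟨q1, q2, q3, q4, q5, q6, q7, q8, q9, q10, q11⟩ := f3 s hs
  have hs' := Finset.mem_Icc.1 hs
  rcases lt_trichotomy s t with hst | hst | hst
  · have a1 : s ≠ t := by omega
    have a2 : s - 1 ≠ t := by omega
    have a3 : ¬ t ≤ s := by omega
    have a4 : ¬ t ≤ s - 1 := by omega
    simp only [Function.update_of_ne a1, Function.update_of_ne a2, if_neg a3, if_neg a4]
    exact ⟨q1, q2, q3, q4, q5, q6, q7, q8, q9, q10, q11⟩
  · subst hst
    have a2 : s - 1 ≠ s := by omega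
    have a4 : ¬ s ≤ s - 1 := by omega
    have k := k5 s (Finset.mem_Icc.2 ⟨le_rfl, hs'.2⟩)
    simp only [Function.update_self, Function.update_of_ne a2, if_neg a4, le_refl, if_true]
    have e1 : E s + P.xiC * (y - gC s) - E (s - 1) = P.xiC * y - gD s / P.xiD := by
      linear_combination q1
    exact ⟨e1, q2, q3, k2.le, k3.le, k.1.le, k.2.le, q8, q9, j0.le, j1.le⟩
  · have a1 : s ≠ t := by omega
    have a3 : t ≤ s := by omega
    have a4 : t ≤ s - 1 := by omega
    have k := k5 s (Finset.mem_Icc.2 ⟨a3, hs'.2⟩)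
    simp only [Function.update_of_ne a1, if_pos a3, if_pos a4]
    refine ⟨by linear_combination q1, q2, q3, ?_, ?_, k.1.le, k.2.le, q8, q9, q10, q11⟩
    all_goals
      by_cases c : s - 1 = t
      · have c' : s = t + 1 := by omega
        subst c'
        have := k4 (by omega)
        rw [c, Function.update_self]
        linarith [this.1, this.2]
      · rw [Function.update_of_ne c]
        assumption

/-!
STATEMENT 4.

If `(gD, gC, E) ∈ S` is marginal (in the discharge resp. charge direction)
at some interval `t` and the uniform price differs from the marginal bid-in
cost there, then some feasible dispatch attains strictly larger profit, and
consequently `LOC(π) = Q(π) − profit(π; gD, gC) > 0`. -/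
theorem positive_LOC_of_price_ne_marginal_cost
    (T : ℕ) (P : ESRParams) (π : ℕ → ℝ) (fD fC : ℕ → ℝ → ℝ)
    (hfDconv : ∀ t, ConvexOn ℝ Set.univ (fD t))
    (hfDdiff : ∀ t, Differentiable ℝ (fD t))
    (hfCconc : ∀ t, ConcaveOn ℝ Set.univ (fC t))
    (hfCdiff : ∀ t, Differentiable ℝ (fC t))
    (gD gC E : ℕ → ℝ)
    (hfeas : Feasible T P gD gC E)
    (t : ℕ) (ht1 : 1 ≤ t) (htT : t ≤ T) :
    (MarginalD T P gD E t → π t ≠ deriv (fD t) (gD t) →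
      (∃ pD pC e, Feasible T P pD pC e ∧
        profit T π π fD fC gD gC < profit T π π fD fC pD pC) ∧
      0 < LOC T P π π fD fC gD gC) ∧
    (MarginalC T P gC E t → π t ≠ deriv (fC t) (gC t) →
      (∃ pD pC e, Feasible T P pD pC e ∧
        profit T π π fD fC gD gC < profit T π π fD fC pD pC) ∧
      0 < LOC T P π π fD fC gD gC) := by
  have key : (∃ pD pC e, Feasible T P pD pC e ∧
        profit T π π fD fC gD gC < profit T π π fD fC pD pC) →
      (∃ pD pC e, Feasible T P pD pC e ∧
        profit T π π fD fC gD gC < profit T π π fD fC pD pC) ∧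
      0 < LOC T P π π fD fC gD gC := by
    intro h
    refine ⟨h, ?_⟩
    obtain ⟨pD, pC, e, hf, hlt⟩ := h
    have := le_csSup (aux_bdd T P π fD fC hfDdiff hfCdiff) ⟨pD, pC, e, hf, rfl⟩
    unfold LOC Qmax
    linarith
  have htm : t ∈ Finset.Icc 1 T := Finset.mem_Icc.2 ⟨ht1, htT⟩
  refine ⟨fun hm hne => key ?_, fun hm hne => key ?_⟩
  · have hd : HasDerivAt (fun y => π t * y - fD t y) (π t * 1 - deriv (fD t) (gD t)) (gD t) :=
      ((hasDerivAt_id _).const_mul _).sub (hfDdiff t _).hasDerivAt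
    obtain ⟨y, hy, hlt⟩ := aux_exists _ _ _ hd (by rw [mul_one]; exact sub_ne_zero.2 hne) _
      (aux_feasD T P gD gC E hfeas t ht1 hm)
    refine ⟨_, _, _, hy, Finset.sum_lt_sum ?_ ⟨t, htm, ?_⟩⟩
    · intro s _
      by_cases c : s = t
      · subst c
        simp only [Function.update_self]
        linarith
      · rw [Function.update_of_ne c]
    · simp only [Function.update_self]
      linarith
  · have hd : HasDerivAt (fun y => fC t y - π t * y) (deriv (fC t) (gC t) - π t * 1) (gC t) :=
      (hfCdiff t _).hasDerivAt.sub ((hasDerivAt_id _).const_mul _)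
    obtain ⟨y, hy, hlt⟩ := aux_exists _ _ _ hd (by rw [mul_one]; exact sub_ne_zero.2 hne.symm) _
      (aux_feasC T P gD gC E hfeas t ht1 hm)
    refine ⟨_, _, _, hy, Finset.sum_lt_sum ?_ ⟨t, htm, ?_⟩⟩
    · intro s _
      by_cases c : s = t
      · subst c
        simp only [Function.update_self]
        linarith
      · rw [Function.update_of_ne c]
    · simp only [Function.update_self]
      linarith
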